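/- Let φ₀ : M → C be a mapping and φ̃ : F → C its unique linear extension with φ̃(1) = 1 and φ̃(xy) = (ξ̃_{x₍₁₎} · φ̃(y)) · φ̃(x₍₂₎) for all x, y ∈ F. Suppose R satisfies the stronger coideal condition Δ̃(R) ⊆ ⟨R⟩ ⊗ F + F ⊗ F·R (where F·R is the left ideal generated by R) and that φ̃(r) = 0 for every r ∈ R. Then φ̃ vanishes on ⟨R⟩ = ker π, there exists a unique linear map φ' : U → C with φ̃ = φ' ∘ π, φ'(1) = 1, and φ' satisfies the cocycle condition φ'(xy) = (ξ_{x₍₁₎} · φ'(y)) · φ'(x₍₂₎) for all x, y ∈ U. -/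

import Mathlib

/-!
The cocycle condition shows that `φ̃(y) = 0` implies `φ̃(xy) = 0`, so `φ̃` kills `F·R`. Since `ξ̃`
kills `⟨R⟩`, both summands of `⟨R⟩ ⊗ F + F ⊗ F·R` contribute nothing to
`φ̃(rb) = (ξ̃_{r₍₁₎} · φ̃(b)) · φ̃(r₍₂₎)`. Hence `φ̃` kills `R·F`, thus also `⟨R⟩ = F·(R·F)`, and it
descends along `π` together with its cocycle condition.
-/

open scoped TensorProduct

/-- The two-sided ideal generated by a set `R`, as a `ℂ`-submodule:
the span of all elements `a * r * b` with `r ∈ R`. -/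
noncomputable def twoSidedSpan {F : Type*} [Semiring F] [Algebra ℂ F] (R : Set F) :
    Submodule ℂ F :=
  Submodule.span ℂ {x : F | ∃ a b : F, ∃ r ∈ R, x = a * r * b}

/-- The left ideal `F·R` generated by a set `R`, as a `ℂ`-submodule:
the span of all elements `a * r` with `r ∈ R`. -/
noncomputable def leftIdealSpan {F : Type*} [Semiring F] [Algebra ℂ F] (R : Set F) :
    Submodule ℂ F :=
  Submodule.span ℂ {x : F | ∃ a : F, ∃ r ∈ R, x = a * r}

/-- The subspace `⟨R⟩ ⊗ F + F ⊗ F·R` of `F ⊗ F`. -/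
noncomputable def coidealBound {F : Type*} [Semiring F] [Algebra ℂ F] (R : Set F) :
    Submodule ℂ (F ⊗[ℂ] F) :=
  Submodule.span ℂ {z : F ⊗[ℂ] F | ∃ a ∈ twoSidedSpan R, ∃ b : F, z = a ⊗ₜ[ℂ] b} ⊔
  Submodule.span ℂ {z : F ⊗[ℂ] F | ∃ a : F, ∃ b ∈ leftIdealSpan R, z = a ⊗ₜ[ℂ] b}

section Factorization

variable {k V W X : Type*} [AddCommMonoid V] [AddCommMonoid W] [AddCommMonoid X]

theorem existsUnique_comp_eq_of_surjective [Semiring k] [Module k V] [Module k W] [Module k X]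
    {p : V →ₗ[k] W} (hp : Function.Surjective p) {f : V →ₗ[k] X}
    (h : ∀ ⦃x y⦄, p x = p y → f x = f y) : ∃! g : W →ₗ[k] X, g ∘ₗ p = f := by
  obtain ⟨s, hs⟩ := hp.hasRightInverse
  let g : W →ₗ[k] X :=
    { toFun := fun w ↦ f (s w)
      map_add' := fun v w ↦ by
        rw [← map_add]
        exact h (by simp only [map_add, hs _])
      map_smul' := fun c w ↦ by
        rw [RingHom.id_apply, ← map_smul]
        exact h (by simp only [map_smul, hs _]) }
  have hg : g ∘ₗ p = f := LinearMap.ext fun x ↦ h (hs (p x))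
  exact ⟨g, hg, fun g' hg' ↦ (LinearMap.cancel_right hp).1 (hg'.trans hg.symm)⟩

theorem map_eq_map_of_ker_le_ker [Ring k] [Module k V] [Module k W] [Module k X]
    {p : V →ₗ[k] W} {f : V →ₗ[k] X} (h : LinearMap.ker p ≤ LinearMap.ker f) {x y : V}
    (hxy : p x = p y) : f x = f y := by
  -- The scalar `-1` provides the negatives missing from the additive monoids.
  let _ : AddCommGroup V := Module.addCommMonoidToAddCommGroup k
  let _ : AddCommGroup W := Module.addCommMonoidToAddCommGroup k
  let _ : AddCommGroup X := Module.addCommMonoidToAddCommGroup k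
  exact LinearMap.sub_mem_ker_iff.1 (h (LinearMap.sub_mem_ker_iff.2 hxy))

end Factorization

theorem freeAlgebra_lift_coe_surjective {k A : Type*} [CommSemiring k] [Semiring A] [Algebra k A]
    {s : Set A} (hs : Algebra.adjoin k s = ⊤) :
    Function.Surjective (FreeAlgebra.lift k ((↑) : s → A)) := by
  rw [← AlgHom.range_eq_top, ← Algebra.adjoin_eq_range_freeAlgebra_lift, hs]

section CoidealBound

variable {F V W : Type*} [Semiring F] [Algebra ℂ F] [AddCommMonoid V] [Module ℂ V]
  [AddCommMonoid W] [Module ℂ W]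

theorem coidealBound_le_ker_map {R : Set F} {f : F →ₗ[ℂ] V} {g : F →ₗ[ℂ] W}
    (hf : twoSidedSpan R ≤ LinearMap.ker f) (hg : leftIdealSpan R ≤ LinearMap.ker g) :
    coidealBound R ≤ LinearMap.ker (TensorProduct.map f g) := by
  refine sup_le (Submodule.span_le.2 ?_) (Submodule.span_le.2 ?_)
  · rintro _ ⟨a, ha, b, rfl⟩
    simp [LinearMap.mem_ker.1 (hf ha)]
  · rintro _ ⟨a, b, hb, rfl⟩
    simp [LinearMap.mem_ker.1 (hg hb)]

end CoidealBound

/-- The cocycle condition `φ(xy) = (ξ_{x₍₁₎} · φ(y)) · φ(x₍₂₎)` for a linear map `φ : A → C`, where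
`δ x = x₍₁₎ ⊗ x₍₂₎`. Both the action `ξ` and the comultiplication `δ` are arbitrary linear maps, so
that the same notion covers the maps `φ̃` and `φ'`. -/
def IsCocycle {k A C : Type*} [CommSemiring k] [Semiring A] [Algebra k A] [Semiring C]
    [Algebra k C] (ξ : A →ₗ[k] C →ₗ[k] C) (δ : A →ₗ[k] A ⊗[k] A) (φ : A →ₗ[k] C) : Prop :=
  ∀ x y : A, φ (x * y) = LinearMap.mul' k C (TensorProduct.map (ξ.flip (φ y)) φ (δ x))

namespace IsCocycle

section CommSemiring

variable {k A B C : Type*} [CommSemiring k] [Semiring A] [Algebra k A] [Semiring B] [Algebra k B]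
  [Semiring C] [Algebra k C]

theorem map_mul_eq_zero {ξ : A →ₗ[k] C →ₗ[k] C} {δ : A →ₗ[k] A ⊗[k] A} {φ : A →ₗ[k] C}
    (hφ : IsCocycle ξ δ φ) (x : A) {y : A} (hy : φ y = 0) : φ (x * y) = 0 := by
  rw [hφ, hy, map_zero, TensorProduct.map_zero_left, LinearMap.zero_apply, map_zero]

theorem of_comp_surjective {π : A →ₐ[k] B} (hπ : Function.Surjective π)
    {δA : A →ₗ[k] A ⊗[k] A} {δB : B →ₗ[k] B ⊗[k] B}
    (hδ : ∀ x, TensorProduct.map π.toLinearMap π.toLinearMap (δA x) = δB (π x))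
    {ξ : B →ₗ[k] C →ₗ[k] C} {φ : B →ₗ[k] C}
    (hφ : IsCocycle (ξ ∘ₗ π.toLinearMap) δA (φ ∘ₗ π.toLinearMap)) : IsCocycle ξ δB φ := by
  intro u v
  obtain ⟨x, rfl⟩ := hπ u
  obtain ⟨y, rfl⟩ := hπ v
  calc φ (π x * π y)
      = (φ ∘ₗ π.toLinearMap) (x * y) := by simp
    _ = LinearMap.mul' k C (TensorProduct.map (ξ.flip (φ (π y)) ∘ₗ π.toLinearMap)
          (φ ∘ₗ π.toLinearMap) (δA x)) := hφ x y
    _ = LinearMap.mul' k C (TensorProduct.map (ξ.flip (φ (π y))) φ (δB (π x))) := by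
      rw [TensorProduct.map_comp, LinearMap.comp_apply, hδ]

end CommSemiring

section Vanishing

variable {F C : Type*} [Semiring F] [Algebra ℂ F] [Semiring C] [Algebra ℂ C]
  {ξ : F →ₗ[ℂ] C →ₗ[ℂ] C} {δ : F →ₗ[ℂ] F ⊗[ℂ] F} {φ : F →ₗ[ℂ] C} {R : Set F}

theorem leftIdealSpan_le_ker (hφ : IsCocycle ξ δ φ) (hR : ∀ r ∈ R, φ r = 0) :
    leftIdealSpan R ≤ LinearMap.ker φ := by
  refine Submodule.span_le.2 ?_
  rintro _ ⟨a, r, hr, rfl⟩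
  exact hφ.map_mul_eq_zero a (hR r hr)

theorem map_mul_eq_zero_of_mem_coidealBound (hφ : IsCocycle ξ δ φ) (hR : ∀ r ∈ R, φ r = 0)
    (hξ : twoSidedSpan R ≤ LinearMap.ker ξ) {x : F} (hx : δ x ∈ coidealBound R) (y : F) :
    φ (x * y) = 0 := by
  have hξy : twoSidedSpan R ≤ LinearMap.ker (ξ.flip (φ y)) := fun z hz ↦ by
    rw [LinearMap.mem_ker, LinearMap.flip_apply, LinearMap.mem_ker.1 (hξ hz), LinearMap.zero_apply]
  have hmap := coidealBound_le_ker_map hξy (hφ.leftIdealSpan_le_ker hR) hx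
  rw [hφ, LinearMap.mem_ker.1 hmap, map_zero]

theorem twoSidedSpan_le_ker (hφ : IsCocycle ξ δ φ) (hR : ∀ r ∈ R, φ r = 0)
    (hξ : twoSidedSpan R ≤ LinearMap.ker ξ) (hδ : ∀ r ∈ R, δ r ∈ coidealBound R) :
    twoSidedSpan R ≤ LinearMap.ker φ := by
  refine Submodule.span_le.2 ?_
  rintro _ ⟨a, b, r, hr, rfl⟩
  rw [mul_assoc]
  exact hφ.map_mul_eq_zero a (hφ.map_mul_eq_zero_of_mem_coidealBound hR hξ (hδ r hr) b)

end Vanishing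

end IsCocycle

theorem stmt6_general {F U C : Type*} [Semiring F] [Algebra ℂ F] [Semiring U] [Algebra ℂ U]
    [Semiring C] [Algebra ℂ C] (π : F →ₐ[ℂ] U) (hπ : Function.Surjective π) (R : Set F)
    (hker : ∀ x, π x = 0 ↔ x ∈ twoSidedSpan R)
    (δF : F →ₗ[ℂ] F ⊗[ℂ] F) (δU : U →ₗ[ℂ] U ⊗[ℂ] U)
    (hδ : ∀ x, TensorProduct.map π.toLinearMap π.toLinearMap (δF x) = δU (π x))
    (ξ : U →ₗ[ℂ] C →ₗ[ℂ] C) (φ : F →ₗ[ℂ] C) (hφone : φ 1 = 1)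
    (hφ : IsCocycle (ξ ∘ₗ π.toLinearMap) δF φ)
    (hcoideal : ∀ r ∈ R, δF r ∈ coidealBound R) (hR : ∀ r ∈ R, φ r = 0) :
    (∀ x ∈ twoSidedSpan R, φ x = 0) ∧
    ∃! φ' : U →ₗ[ℂ] C, (∀ x, φ x = φ' (π x)) ∧ φ' 1 = 1 ∧ IsCocycle ξ δU φ' := by
  have hker' : LinearMap.ker π.toLinearMap = twoSidedSpan R := Submodule.ext hker
  have hξ : twoSidedSpan R ≤ LinearMap.ker (ξ ∘ₗ π.toLinearMap) :=
    hker'.ge.trans (LinearMap.ker_le_ker_comp _ _)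
  have hvanish : twoSidedSpan R ≤ LinearMap.ker φ := hφ.twoSidedSpan_le_ker hR hξ hcoideal
  obtain ⟨φ', rfl, huniq⟩ :=
    existsUnique_comp_eq_of_surjective (p := π.toLinearMap) hπ fun _ _ ↦
      map_eq_map_of_ker_le_ker (hker'.trans_le hvanish)
  refine ⟨hvanish, φ', ⟨fun _ ↦ rfl, ?_, hφ.of_comp_surjective hπ hδ⟩, ?_⟩
  · simpa using hφone
  · rintro ψ ⟨hψ, -, -⟩
    exact huniq ψ (LinearMap.ext fun x ↦ (hψ x).symm)

/-- With the same setup as Statement 5, suppose instead that `R` satisfies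
the stronger coideal condition `Δ̃(R) ⊆ ⟨R⟩ ⊗ F + F ⊗ F·R` and that `φ̃(r) = 0` for all
`r ∈ R`.  Then `φ̃` vanishes on `⟨R⟩ = ker π` and factors uniquely through `π` as a map
`φ' : U → C` with `φ'(1) = 1` satisfying the cocycle condition on `U`. -/
theorem stmt6 {U C : Type*} [Semiring U] [Bialgebra ℂ U] [Semiring C] [Algebra ℂ C]
    (M : Set U) (hgen : Algebra.adjoin ℂ M = ⊤)
    -- `π : F → U`, `F := FreeAlgebra ℂ M`:
    (π : FreeAlgebra ℂ M →ₐ[ℂ] U) (hπ : π = FreeAlgebra.lift ℂ ((↑) : M → U))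
    -- the set of defining relations: `⟨R⟩ = ker π`:
    (R : Set (FreeAlgebra ℂ M))
    (hker : ∀ x : FreeAlgebra ℂ M, π x = 0 ↔ x ∈ twoSidedSpan R)
    -- the lifted comultiplication on `F`:
    (Δt : FreeAlgebra ℂ M →ₐ[ℂ] FreeAlgebra ℂ M ⊗[ℂ] FreeAlgebra ℂ M)
    (hΔt : ∀ x : FreeAlgebra ℂ M,
      TensorProduct.map π.toLinearMap π.toLinearMap (Δt x) =
        Coalgebra.comul (R := ℂ) (π x))
    -- the left `U`-module structure `ξ` on `C`:
    (ξ : U →ₗ[ℂ] C →ₗ[ℂ] C)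
    (hξone : ξ 1 = LinearMap.id)
    (hξmul : ∀ x y : U, ξ (x * y) = ξ x ∘ₗ ξ y)
    (hξunit : ∀ x : U, ξ x 1 = Coalgebra.counit (R := ℂ) x • (1 : C))
    (hξleib : ∀ (x : U) (f g : C),
      ξ x (f * g) =
        LinearMap.mul' ℂ C (TensorProduct.map (ξ.flip f) (ξ.flip g)
          (Coalgebra.comul (R := ℂ) x)))
    -- the extension `φ̃ : F → C`, satisfying the cocycle condition w.r.t. `ξ̃ := ξ ∘ π`:
    (φt : FreeAlgebra ℂ M →ₗ[ℂ] C)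
    (hφtone : φt 1 = 1)
    (hφtcoc : ∀ x y : FreeAlgebra ℂ M,
      φt (x * y) =
        LinearMap.mul' ℂ C
          (TensorProduct.map ((ξ.flip (φt y)) ∘ₗ π.toLinearMap) φt (Δt x)))
    -- the stronger coideal condition `Δ̃(R) ⊆ ⟨R⟩ ⊗ F + F ⊗ F·R`:
    (hcoideal : ∀ r ∈ R, Δt r ∈ coidealBound R)
    -- the weaker condition `φ̃(R) = 0`:
    (hvanish : ∀ r ∈ R, φt r = 0) :
    (∀ x ∈ twoSidedSpan R, φt x = 0) ∧
    ∃! φ' : U →ₗ[ℂ] C,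
      (∀ x : FreeAlgebra ℂ M, φt x = φ' (π x)) ∧
      φ' 1 = 1 ∧
      (∀ x y : U, φ' (x * y) =
        LinearMap.mul' ℂ C
          (TensorProduct.map (ξ.flip (φ' y)) φ' (Coalgebra.comul (R := ℂ) x))) :=
  stmt6_general π (hπ ▸ freeAlgebra_lift_coe_surjective hgen) R hker Δt.toLinearMap
    Coalgebra.comul hΔt ξ φt hφtone hφtcoc hcoideal hvanish
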